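/- arXiv:0711.3030 — 2 statements merged into one kernel-verified Lean document; each statement's English description precedes it below -/
import Mathlib

section
/- If λ = χ⁺ = 2^χ > ℵ₁ and S ⊆ λ is a stationary set such that cf(δ) ≠ cf(χ) for every δ ∈ S, then ◊_S holds. -/
open Ordinal Set Cardinal

/-- `C` is a closed unbounded subset of the ordinal `o`. -/
def IsClubIn (o : Ordinal.{0}) (C : Set Ordinal) : Prop :=
  C ⊆ Set.Iio o ∧ (∀ a < o, ∃ b ∈ C, a ≤ b) ∧
  ∀ a < o, (C ∩ Set.Iio a).Nonempty → sSup (C ∩ Set.Iio a) = a → a ∈ C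

/-- `S` is a stationary subset of the ordinal `o`. -/
def IsStatIn (o : Ordinal.{0}) (S : Set Ordinal) : Prop :=
  S ⊆ Set.Iio o ∧ ∀ C, IsClubIn o C → (S ∩ C).Nonempty

/-- The functional version of the diamond principle on `S ⊆ o`. -/
def DiamondFun (o : Ordinal.{0}) (S : Set Ordinal) : Prop :=
  ∃ g : Ordinal → Ordinal → Ordinal,
    (∀ δ ∈ S, ∀ α < δ, g δ α < δ) ∧
    ∀ f : Ordinal → Ordinal, (∀ α < o, f α < o) →
      IsStatIn o {δ | δ ∈ S ∧ ∀ α < δ, f α = g δ α}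

/-- The set version of the diamond principle on `S ⊆ o`. -/
def DiamondSet (o : Ordinal.{0}) (S : Set Ordinal) : Prop :=
  ∃ A : Ordinal → Set Ordinal,
    (∀ δ ∈ S, A δ ⊆ Set.Iio δ) ∧
    ∀ X, X ⊆ Set.Iio o → IsStatIn o {δ | δ ∈ S ∧ X ∩ Set.Iio δ = A δ}

/-- The diamond-star principle on `S ⊆ o`. -/
def DiamondStar (o : Ordinal.{0}) (S : Set Ordinal) : Prop :=
  ∃ 𝒜 : Ordinal → Set (Set Ordinal),
    (∀ α ∈ S, (∀ X ∈ 𝒜 α, X ⊆ Set.Iio α) ∧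
        Cardinal.mk ↥(𝒜 α) ≤ Cardinal.lift.{1} α.card) ∧
    ∀ X, X ⊆ Set.Iio o → ∃ C, IsClubIn o C ∧ ∀ α ∈ C ∩ S, X ∩ Set.Iio α ∈ 𝒜 α

/-- `D` is a (proper) filter on the set of ordinals below `o`. -/
def IsFilterOn (o : Ordinal.{0}) (D : Set (Set Ordinal.{0})) : Prop :=
  (∀ A ∈ D, A ⊆ Set.Iio o) ∧ Set.Iio o ∈ D ∧ ∅ ∉ D ∧
  (∀ A ∈ D, ∀ B, B ⊆ Set.Iio o → A ⊆ B → B ∈ D) ∧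
  (∀ A ∈ D, ∀ B ∈ D, A ∩ B ∈ D)

/-- `D` extends the club filter on `o`. -/
def ExtendsClubs (o : Ordinal.{0}) (D : Set (Set Ordinal.{0})) : Prop :=
  ∀ C, IsClubIn o C → C ∈ D

/-- `D` is `μ`-complete: closed under intersections of fewer than `μ` members. -/
def CompleteFor (μ : Cardinal.{0}) (o : Ordinal.{0}) (D : Set (Set Ordinal.{0})) : Prop :=
  ∀ β : Ordinal, β.card < μ → ∀ s : Ordinal → Set Ordinal,
    (∀ i < β, s i ∈ D) → (Set.Iio o ∩ ⋂ i ∈ Set.Iio β, s i) ∈ D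

/-- `S` is `D`-positive. -/
def DPos (o : Ordinal.{0}) (D : Set (Set Ordinal.{0})) (S : Set Ordinal) : Prop :=
  S ⊆ Set.Iio o ∧ (Set.Iio o \ S) ∉ D

/-- The filter `D + S`. -/
def DPlus (o : Ordinal.{0}) (D : Set (Set Ordinal.{0})) (S : Set Ordinal) : Set (Set Ordinal) :=
  {B | B ⊆ Set.Iio o ∧ B ∪ (Set.Iio o \ S) ∈ D}

/-- The diamond principle for a filter `D` on `o`. -/
def DiamondFilter (o : Ordinal.{0}) (D : Set (Set Ordinal.{0})) : Prop :=
  ∃ S : Set Ordinal, DPos o D S ∧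
    ∃ f : Ordinal → Ordinal → Ordinal,
      (∀ α ∈ S, ∀ β < α, f α β < o) ∧
      ∀ g : Ordinal → Ordinal, (∀ α < o, g α < o) →
        DPos o D {α | α ∈ S ∧ ∀ β < α, g β = f α β}

/-- `λ = o` has strong non-reflection for `S` in `κ`. -/
def SNR (o : Ordinal.{0}) (S : Set Ordinal) (κ : Cardinal.{0}) : Prop :=
  ∃ h : Ordinal → Ordinal, (∀ α < o, h α < κ.ord) ∧
    ∃ E, IsClubIn o E ∧ ∀ δ ∈ S ∩ E, ∃ C, IsClubIn δ C ∧ StrictMonoOn h C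

/-! An element of `λ` can code an initial segment of a `χ × χ` array of functions `λ → λ`; below,
`λ` and `χ` are arbitrary linear orders `α` and `T` with the relevant cardinal properties. Fix
injections `e_δ : δ → χ`, and for `i < χ` let the `i`-th list of candidates at `δ` consist of the
segments of row `i` coded by some `b < δ` with `e_δ(b) < i`. Such a list has fewer than `χ` members.
Given an actual array, if `δ` is closed under coding its initial segments then, as
`cf δ ≠ cf χ`, for some `i` the `i`-th list contains cofinally many initial segments of row `i`.

For each `i`, recursion on `t < χ` now gives a row of functions `Z i t`: guess at `δ` using the
candidates of the `i`-th list that agree with all `Z i s`, `s < t`. If this guess fails to witness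
diamond, let `Z i t` be a function which it guesses correctly only on a nonstationary set. Were all
these guesses to fail, there would be `δ ∈ S` and `i` as above with `Z i t` guessed wrongly at `δ`
for every `t < χ`; but each wrong guess comes from a candidate which agrees with `Z i s` for all
`s < t` and not with `Z i t`, so the `i`-th list at `δ` would have at least `χ` members.
-/

section WellOrders

open Order

universe u

variable {α T ι : Type u}

section LinearOrder

variable [LinearOrder α]

theorem exists_isCofinal_setOf_lt_of_cof_ne [LinearOrder T] [NoMaxOrder T]
    (hne : cof α ≠ cof T) (v : α → T) : ∃ i, IsCofinal {a | v a < i} := by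
  rcases hne.lt_or_gt with hlt | hgt
  · obtain ⟨s, hs, hcard⟩ := exists_cof_eq α
    have himage : ¬ IsCofinal (v '' s) := fun h =>
      (cof_le h).not_gt (mk_image_le.trans_lt (hcard.trans_lt hlt))
    obtain ⟨i, hi⟩ := not_isCofinal_iff.1 himage
    exact ⟨i, hs.mono fun a ha => hi _ (mem_image_of_mem v ha)⟩
  · obtain ⟨s, hs, hcard⟩ := exists_cof_eq T
    by_contra! hbounded
    choose w hw using fun i => not_isCofinal_iff.1 (hbounded i)
    choose next hnext using fun i : T => exists_gt i
    have himage : ¬ IsCofinal ((w ∘ next) '' s) := fun h =>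
      (cof_le h).not_gt (mk_image_le.trans_lt (hcard.trans_lt hgt))
    obtain ⟨b, hb⟩ := not_isCofinal_iff.1 himage
    obtain ⟨i, his, hi⟩ := hs (v b)
    exact lt_asymm (hw _ b (hi.trans_lt (hnext i))) (hb _ (mem_image_of_mem _ his))

theorem noMaxOrder_of_one_lt_cof (h : 1 < cof α) : NoMaxOrder α := by
  have : Nonempty α := cof_ne_zero_iff.1 (one_pos.trans h).ne'
  exact (noTopOrder_iff_noMaxOrder α).1 (one_lt_cof_iff.1 h)

theorem exists_isLUB_of_mk_lt_cof [WellFoundedLT α] {s : Set α} (hs : #s < cof α) :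
    ∃ x, IsLUB s x := by
  have hbdd : BddAbove s := .of_not_isCofinal fun h => (cof_le h).not_gt hs
  obtain ⟨x, hx, hmin⟩ := wellFounded_lt.has_min (upperBounds s) hbdd
  exact ⟨x, hx, fun b hb => not_lt.1 (hmin b hb)⟩

theorem isClub_setOf_mapsTo_Iio [WellFoundedLT α] (hα : ℵ₀ < cof α)
    (hIio : ∀ a : α, #(Iio a) < cof α) (f : α → α) :
    IsClub {x | MapsTo f (Iio x) (Iio x)} := by
  refine ⟨fun s hs _ _ x hx a ha => ?_, fun a => ?_⟩
  · obtain ⟨y, hy, hay⟩ := (lt_isLUB_iff hx).1 ha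
    exact (hs hy hay).trans_le (hx.1 hy)
  · have hbound (b : α) : ∃ c, ∀ y < b, f y < c := by
      obtain ⟨c, hc⟩ := not_isCofinal_iff.1 fun h : IsCofinal (f '' Iio b) =>
        (cof_le h).not_gt (mk_image_le.trans_lt (hIio b))
      exact ⟨c, fun y hy => hc _ (mem_image_of_mem f hy)⟩
    choose g hg using hbound
    obtain ⟨x, hx⟩ : ∃ x, IsLUB (range fun n : ℕ => g^[n] a) x :=
      exists_isLUB_of_mk_lt_cof ((countable_range _).le_aleph0.trans_lt hα)
    have hiterate (n : ℕ) : g^[n] a ≤ x := hx.1 (mem_range_self n)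
    refine ⟨x, fun y hy => ?_, hiterate 0⟩
    obtain ⟨_, ⟨n, rfl⟩, hn⟩ := (lt_isLUB_iff hx).1 hy
    calc f y < g (g^[n] a) := hg _ y hn
      _ = g^[n + 1] a := (Function.iterate_succ_apply' g n a).symm
      _ ≤ x := hiterate (n + 1)

theorem isStationary_inter_of_isClub [WellFoundedLT α] (hα : cof α ≠ ℵ₀) {S D : Set α}
    (hS : IsStationary S) (hD : IsClub D) : IsStationary (S ∩ D) := fun E hE => by
  simpa only [inter_assoc] using hS (hD.inter hα hE)

end LinearOrder

theorem mk_le_of_forall_exists_first_failure [LinearOrder T] {R : ι → T → Prop}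
    (h : ∀ t, ∃ p, (∀ s < t, R p s) ∧ ¬ R p t) : #T ≤ #ι := by
  choose p hbefore hat using h
  refine mk_le_of_injective (f := p) fun s t hst => ?_
  rcases lt_trichotomy s t with hlt | heq | hgt
  · exact (hat s (hst ▸ hbefore t s hlt)).elim
  · exact heq
  · exact (hat t (hst ▸ hbefore s t hgt)).elim

theorem exists_forall_of_forall_exists_extension {T ι : Type*} [LinearOrder T]
    [WellFoundedLT T] {R : ∀ t : T, (Iio t → ι) → ι → Prop} (h : ∀ t prev, ∃ x, R t prev x) :
    ∃ Z : T → ι, ∀ t, R t (fun s => Z s) (Z t) := by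
  choose F hF using h
  let Z : T → ι := wellFounded_lt.fix fun t prev => F t fun s => prev s s.2
  refine ⟨Z, fun t => ?_⟩
  have hZ : Z t = F t fun s => Z s := wellFounded_lt.fix_eq _ t
  exact hZ ▸ hF t _

section Preorder

variable [Preorder α]

/-- An initial segment, of length `height`, of a family of functions `α → α` indexed by `ι`: a
candidate for the restriction to `Iio height` of the family which is to be guessed. -/
structure PartialFamily (ι α : Type u) [Preorder α] where
  height : α
  val : ι → Iio height → α

namespace PartialFamily

/-- The initial segment of length `a` of the family `Z`, which a good list of candidates contains
for cofinally many `a`. -/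
def restrict (Z : ι → α → α) (a : α) : PartialFamily ι α := ⟨a, fun j y => Z j y⟩

/-- The `j`-th member of the partial family `p` is a restriction of `f`. Candidates which do not
agree with the functions already constructed are discarded. -/
def Agrees (p : PartialFamily ι α) (j : ι) (f : α → α) : Prop :=
  ∀ y : Iio p.height, p.val j y = f y

theorem agrees_restrict (Z : ι → α → α) (a : α) (j : ι) : (restrict Z a).Agrees j (Z j) :=
  fun _ => rfl

end PartialFamily

theorem mk_sigma_Iio_fun_le {χ : Cardinal.{u}} (hχ : ℵ₀ ≤ χ) (hα : #α = 2 ^ χ)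
    (hIio : ∀ a : α, #(Iio a) ≤ χ) (hι : #ι ≤ χ) : #(Σ a : α, ι → Iio a → α) ≤ #α := by
  have hmul : #α * #α = #α :=
    mul_eq_self (hα ▸ hχ.trans (cantor χ).le)
  have hfun (a : α) : #(ι → Iio a → α) ≤ #α := by
    calc #(ι → Iio a → α) = 2 ^ (χ * #(Iio a) * #ι) := by
          simp only [mk_pi, prod_const, Cardinal.lift_id, hα, power_mul]
      _ ≤ 2 ^ (χ * χ * χ) :=
          power_le_power_left two_ne_zero (mul_le_mul' (mul_le_mul_right (hIio a) χ) hι)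
      _ = #α := by rw [mul_eq_self hχ, mul_eq_self hχ, hα]
  calc #(Σ a : α, ι → Iio a → α) ≤ Cardinal.sum fun _ : α => #α := by
        rw [mk_sigma]; exact sum_le_sum _ _ hfun
    _ = #α := by rw [sum_const', hmul]

theorem exists_code_restrict {κ : Type u} {χ : Cardinal.{u}} (hχ : ℵ₀ ≤ χ) (hα : #α = 2 ^ χ)
    (hIio : ∀ a : α, #(Iio a) ≤ χ) (hκ : #κ ≤ χ) (hι : #ι ≤ χ) :
    ∃ code : α → κ → PartialFamily ι α,
      ∀ (Z : κ → ι → α → α) (a : α), ∃ b, ∀ i, code b i = PartialFamily.restrict (Z i) a := by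
  have hprod : #(κ × ι) ≤ χ := by
    simpa only [mk_prod, Cardinal.lift_id, mul_eq_self hχ] using mul_le_mul' hκ hι
  obtain ⟨e⟩ := mk_sigma_Iio_fun_le hχ hα hIio hprod
  have : Nonempty α := mk_ne_zero_iff.1 (hα ▸ power_ne_zero χ two_ne_zero)
  have : Nonempty (Σ a : α, κ × ι → Iio a → α) := ⟨⟨Classical.arbitrary α, fun _ y => y⟩⟩
  let decode (q : Σ a : α, κ × ι → Iio a → α) (i : κ) : PartialFamily ι α :=
    ⟨q.1, fun j => q.2 (i, j)⟩
  refine ⟨fun b => decode (Function.invFun e b), fun Z a => ?_⟩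
  obtain ⟨b, hb⟩ := Function.invFun_surjective e.injective ⟨a, fun ij y => Z ij.1 ij.2 y⟩
  exact ⟨b, fun i => congrArg (decode · i) hb⟩

/-- The values below `δ` taken at `x` by the `t`-th members of those candidates in `C` which
agree with the functions `Z s` at all the indices `s < t`. Different candidates may propose
different values. -/
def proposals [Preorder ι] (C : Set (PartialFamily ι α)) (t : ι) (Z : Iio t → α → α)
    (δ x : α) : Set α :=
  {v | v < δ ∧ ∃ p ∈ C, (∀ s : Iio t, p.Agrees s (Z s)) ∧ ∃ hx : x < p.height, p.val t ⟨x, hx⟩ = v}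

open Classical in
/-- The guess at `δ` for the function of index `t`, once those of index `s < t` are known: its value
at `x` is one of the `proposals`, or by default `x`, so that the guess always maps `Iio δ` to
itself. -/
noncomputable def guess [Preorder ι] (C : Set (PartialFamily ι α)) (t : ι)
    (Z : Iio t → α → α) (δ x : α) : α :=
  if h : (proposals C t Z δ x).Nonempty then h.some else x

theorem mapsTo_guess [Preorder ι] (C : Set (PartialFamily ι α)) (t : ι) (Z : Iio t → α → α)
    (δ : α) : MapsTo (guess C t Z δ) (Iio δ) (Iio δ) := fun x hx => by
  unfold guess
  split
  case isTrue h => exact h.some_mem.1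
  case isFalse => exact hx

theorem exists_eqOn_guess [LinearOrder ι] {C : Set (PartialFamily ι α)} (hC : #C < #ι)
    {Z : ι → α → α} {δ : α} (hZ : ∀ t, MapsTo (Z t) (Iio δ) (Iio δ))
    (hcov : ∀ b < δ, ∃ a, b < a ∧ PartialFamily.restrict Z a ∈ C) :
    ∃ t, EqOn (Z t) (guess C t (fun s => Z s) δ) (Iio δ) := by
  by_contra! hne
  refine hC.not_ge (mk_le_of_forall_exists_first_failure
    (R := fun (p : C) t => p.1.Agrees t (Z t)) fun t => ?_)
  obtain ⟨x, hx, hguess⟩ : ∃ x < δ, Z t x ≠ guess C t (fun s => Z s) δ x := by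
    simpa only [EqOn, not_forall, exists_prop, mem_Iio] using hne t
  have hproposals : (proposals C t (fun s => Z s) δ x).Nonempty := by
    obtain ⟨a, hxa, ha⟩ := hcov x hx
    exact ⟨Z t x, hZ t hx, _, ha, fun s => PartialFamily.agrees_restrict Z a s, hxa, rfl⟩
  obtain ⟨-, p, hpC, hp, hxp, hval⟩ := hproposals.some_mem
  rw [guess, dif_pos hproposals, ← hval] at hguess
  exact ⟨⟨p, hpC⟩, fun s hs => hp ⟨s, hs⟩, fun h => hguess (h ⟨x, hxp⟩).symm⟩

end Preorder

section LinearOrder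

variable [LinearOrder α]

theorem exists_candidates_cofinal [WellFoundedLT α] [LinearOrder T] [NoMaxOrder T]
    (hT : ∀ i : T, #(Iio i) < #T) (hTinf : ℵ₀ ≤ #T) (hα : #α = 2 ^ #T) (hι : #ι ≤ #T)
    (hIio : ∀ a : α, #(Iio a) ≤ #T) (hcof : #T < cof α) :
    ∃ C : T → α → Set (PartialFamily ι α), (∀ i δ, #(C i δ) < #T) ∧
      ∀ Z : T → ι → α → α, ∃ D, IsClub D ∧ ∀ δ ∈ D, Order.cof (Iio δ) ≠ Order.cof T →
        ∃ i, ∀ b < δ, ∃ a, b < a ∧ PartialFamily.restrict (Z i) a ∈ C i δ := by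
  obtain ⟨code, hcode⟩ := exists_code_restrict hTinf hα hIio le_rfl hι (κ := T)
  have e (δ : α) : Iio δ ↪ T := (hIio δ).some
  refine ⟨fun i δ => (code · i) '' (Subtype.val '' (e δ ⁻¹' Iio i)), fun i δ => ?_, fun Z => ?_⟩
  · calc #((code · i) '' (Subtype.val '' (e δ ⁻¹' Iio i))) ≤ #(e δ ⁻¹' Iio i) :=
          mk_image_le.trans mk_image_le
      _ ≤ #(Iio i) := mk_preimage_of_injective _ _ (e δ).injective
      _ < #T := hT i
  · have : NoMaxOrder α := noMaxOrder_of_one_lt_cof (one_lt_aleph0.trans (hTinf.trans_lt hcof))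
    have hlater (b : α) : ∃ c a, b < a ∧ ∀ i, code c i = PartialFamily.restrict (Z i) a := by
      obtain ⟨a, hba⟩ := exists_gt b
      obtain ⟨c, hc⟩ := hcode Z a
      exact ⟨c, a, hba, hc⟩
    choose f height hlt hf using hlater
    refine ⟨_, isClub_setOf_mapsTo_Iio (hTinf.trans_lt hcof)
      (fun a => (hIio a).trans_lt hcof) f, fun δ hδ hne => ?_⟩
    obtain ⟨i, hi⟩ :=
      exists_isCofinal_setOf_lt_of_cof_ne hne fun b => e δ ⟨f b, hδ b.2⟩
    refine ⟨i, fun b hb => ?_⟩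
    obtain ⟨c, hc, hbc⟩ := hi ⟨b, hb⟩
    exact ⟨height c, lt_of_le_of_lt hbc (hlt c), f c, ⟨⟨f c, hδ c.2⟩, hc, rfl⟩, hf c i⟩

theorem exists_isStationary_eqOn_guess [WellFoundedLT α] [LinearOrder T] [NoMaxOrder T]
    (hT : ∀ i : T, #(Iio i) < #T) (hTinf : ℵ₀ ≤ #T) (hα : #α = 2 ^ #T)
    (hIio : ∀ a : α, #(Iio a) ≤ #T) (hcof : #T < cof α) {S : Set α} (hS : IsStationary S)
    (hne : ∀ δ ∈ S, Order.cof (Iio δ) ≠ Order.cof T) :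
    ∃ C : T → α → Set (PartialFamily T α), ∀ Z : T → T → α → α, ∃ i t,
      IsStationary {δ | δ ∈ S ∧ EqOn (Z i t) (guess (C i δ) t (fun s => Z i s) δ) (Iio δ)} := by
  obtain ⟨C, hC, hcandidates⟩ := exists_candidates_cofinal hT hTinf hα le_rfl hIio hcof (ι := T)
  refine ⟨C, fun Z => ?_⟩
  obtain ⟨D, hD, hcov⟩ := hcandidates Z
  have haleph0 : ℵ₀ < cof α := hTinf.trans_lt hcof
  let E : Set α := ⋂ p : T × T, {x | MapsTo (Z p.1 p.2) (Iio x) (Iio x)}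
  have hcard : #(T × T) < cof α := by
    rwa [mk_prod, Cardinal.lift_id, mul_eq_self hTinf]
  have hE : IsClub E := .iInter haleph0.ne' (by simpa only [Cardinal.lift_id] using hcard) fun p =>
    isClub_setOf_mapsTo_Iio haleph0 (fun a => (hIio a).trans_lt hcof) _
  have hunion : IsStationary (⋃ p : T × T,
      {δ | δ ∈ S ∧ EqOn (Z p.1 p.2) (guess (C p.1 δ) p.2 (fun s => Z p.1 s) δ) (Iio δ)}) := by
    refine (isStationary_inter_of_isClub haleph0.ne' hS (hD.inter haleph0.ne' hE)).mono ?_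
    rintro δ ⟨hδS, hδD, hδE⟩
    obtain ⟨i, hi⟩ := hcov δ hδD (hne δ hδS)
    obtain ⟨t, ht⟩ := exists_eqOn_guess (hC i δ) (fun t => mem_iInter.1 hδE (i, t)) hi
    exact mem_iUnion.2 ⟨(i, t), hδS, ht⟩
  rw [isStationary_iUnion_iff haleph0.ne' (by simpa only [Cardinal.lift_id] using hcard)] at hunion
  obtain ⟨⟨i, t⟩, hit⟩ := hunion
  exact ⟨i, t, hit⟩

/-- The functional form of the diamond principle on a subset `S` of a linear order. Since `g δ` is
a function on all of `α`, only its values on `Iio δ` are meaningful. -/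
def Diamond (S : Set α) : Prop :=
  ∃ g : α → α → α, (∀ δ ∈ S, MapsTo (g δ) (Iio δ) (Iio δ)) ∧
    ∀ f : α → α, IsStationary {δ | δ ∈ S ∧ EqOn f (g δ) (Iio δ)}

theorem diamond_of_cof_ne [WellFoundedLT α] [LinearOrder T] [WellFoundedLT T] [NoMaxOrder T]
    (hT : ∀ i : T, #(Iio i) < #T) (hTinf : ℵ₀ ≤ #T) (hα : #α = 2 ^ #T)
    (hIio : ∀ a : α, #(Iio a) ≤ #T) (hcof : #T < cof α) {S : Set α} (hS : IsStationary S)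
    (hne : ∀ δ ∈ S, Order.cof (Iio δ) ≠ Order.cof T) : Diamond S := by
  obtain ⟨C, hC⟩ := exists_isStationary_eqOn_guess hT hTinf hα hIio hcof hS hne
  by_contra hdiamond
  have hcounterexample (i t : T) (Z : Iio t → α → α) : ∃ f : α → α,
      ¬ IsStationary {δ | δ ∈ S ∧ EqOn f (guess (C i δ) t Z δ) (Iio δ)} := by
    by_contra! hguess
    exact hdiamond ⟨fun δ => guess (C i δ) t Z δ, fun δ _ => mapsTo_guess _ _ _ _, hguess⟩
  choose Z hZ using fun i => exists_forall_of_forall_exists_extension (hcounterexample i)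
  obtain ⟨i, t, hit⟩ := hC Z
  exact hZ i t hit

end LinearOrder

end WellOrders

section Ordinals

variable {o : Ordinal.{0}}

theorem isClubIn_image_val {C : Set (Iio o)} (hC : IsClub C) : IsClubIn o (Subtype.val '' C) := by
  refine ⟨Subtype.coe_image_subset _ _, fun a ha => ?_, fun a ha hne hsup => ?_⟩
  · obtain ⟨b, hb, hab⟩ := hC.isCofinal ⟨a, ha⟩
    exact ⟨b, mem_image_of_mem _ hb, hab⟩
  · have hlub : IsLUB (C ∩ Iio ⟨a, ha⟩) ⟨a, ha⟩ := by
      refine ⟨fun b hb => hb.2.le, fun b hb => ?_⟩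
      have hle : sSup (Subtype.val '' C ∩ Iio a) ≤ b := by
        refine csSup_le' ?_
        rintro _ ⟨⟨c, hc, rfl⟩, hca⟩
        exact hb ⟨hc, hca⟩
      exact hsup.ge.trans hle
    obtain ⟨_, ⟨b, hb, rfl⟩, hba⟩ := hne
    exact ⟨⟨a, ha⟩, hC.isLUB_mem inter_subset_left ⟨b, hb, hba⟩ hlub, rfl⟩

theorem isClub_preimage_val {C : Set Ordinal} (hC : IsClubIn o C) :
    IsClub (Subtype.val ⁻¹' C : Set (Iio o)) := by
  obtain ⟨hsub, hunbounded, hclosed⟩ := hC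
  refine ⟨fun s hs hne _ x hx => ?_, fun a => ?_⟩
  · by_cases hxs : x ∈ s
    · exact hs hxs
    have hlt {y : Iio o} (hy : y ∈ s) : y < x := (hx.1 hy).lt_of_ne fun h => hxs (h ▸ hy)
    have hle : sSup (C ∩ Iio x.1) ≤ x := csSup_le' fun _ hy => hy.2.le
    have hbdd : BddAbove (C ∩ Iio x.1) := ⟨x, fun _ hy => hy.2.le⟩
    have hge : x ≤ (⟨sSup (C ∩ Iio x.1), hle.trans_lt x.2⟩ : Iio o) :=
      hx.2 fun y hy => le_csSup hbdd ⟨hs hy, hlt hy⟩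
    exact hclosed x x.2 (hne.elim fun y hy => ⟨y, hs hy, hlt hy⟩) (hle.antisymm hge)
  · obtain ⟨b, hb, hab⟩ := hunbounded a a.2
    exact ⟨⟨b, hsub hb⟩, hb, hab⟩

theorem isStatIn_iff_isStationary_preimage_val {S : Set Ordinal} (hS : S ⊆ Iio o) :
    IsStatIn o S ↔ IsStationary (Subtype.val ⁻¹' S : Set (Iio o)) := by
  constructor
  · rintro ⟨-, hstat⟩ C hC
    obtain ⟨_, hδS, δ, hδC, rfl⟩ := hstat _ (isClubIn_image_val hC)
    exact ⟨δ, hδS, hδC⟩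
  · intro hstat
    refine ⟨hS, fun C hC => ?_⟩
    obtain ⟨δ, hδ⟩ := hstat (isClub_preimage_val hC)
    exact ⟨δ, hδ⟩

open Classical in
theorem diamondFun_of_diamond_preimage_val {S : Set Ordinal} (hS : S ⊆ Iio o)
    (h : Diamond (Subtype.val ⁻¹' S : Set (Iio o))) : DiamondFun o S := by
  obtain ⟨g, hmaps, hg⟩ := h
  let G (δ x : Ordinal) : Ordinal := if h : δ < o ∧ x < o then g ⟨δ, h.1⟩ ⟨x, h.2⟩ else 0
  have hG {δ x : Ordinal} (hδ : δ < o) (hx : x < o) : G δ x = g ⟨δ, hδ⟩ ⟨x, hx⟩ :=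
    dif_pos ⟨hδ, hx⟩
  refine ⟨G, fun δ hδ x hx => ?_, fun f hf => ?_⟩
  · have hδo : δ < o := hS hδ
    rw [hG hδo (hx.trans hδo)]
    exact hmaps ⟨δ, hδo⟩ hδ hx
  · refine (isStatIn_iff_isStationary_preimage_val fun δ hδ => hS hδ.1).2
      ((hg fun x => ⟨f x, hf x x.2⟩).mono ?_)
    rintro δ ⟨hδS, hδ⟩
    refine ⟨hδS, fun x hx => ?_⟩
    have hxo : x < o := hx.trans δ.2
    rw [hG δ.2 hxo]
    exact congrArg Subtype.val (hδ (x := ⟨x, hxo⟩) hx)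

/-- The predecessors of `δ` in `Iio o` are those of the ordinal `δ`; this transfers cardinality
and cofinality. -/
def orderIsoIioCoe (δ : Iio o) : Iio δ ≃o Iio δ.1 where
  toFun x := ⟨x.1, x.2⟩
  invFun y := ⟨⟨y, mem_Iio.2 (lt_trans (mem_Iio.1 y.2) δ.2)⟩, y.2⟩
  map_rel_iff' := .rfl

theorem mk_Iio_coe (δ : Iio o) : #(Iio δ) = Cardinal.lift.{1} δ.1.card :=
  (mk_congr (orderIsoIioCoe δ).toEquiv).trans (Cardinal.mk_Iio_ordinal δ.1)

theorem cof_Iio_coe (δ : Iio o) : Order.cof (Iio δ) = Cardinal.lift.{1} δ.1.cof := by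
  rw [(orderIsoIioCoe δ).cof_congr, Ordinal.cof_Iio, lift_cof]

theorem mk_Iio_ord (c : Cardinal.{0}) : #(Iio c.ord) = Cardinal.lift.{1} c := by
  rw [Cardinal.mk_Iio_ordinal, card_ord]

end Ordinals

theorem stmt4 (χ : Cardinal.{0}) (hχ : ℵ₀ ≤ χ) (h2 : (2 : Cardinal.{0}) ^ χ = Order.succ χ)
    (hbig : Cardinal.aleph 1 < Order.succ χ)
    (S : Set Ordinal) (hS : IsStatIn (Order.succ χ).ord S)
    (hcf : ∀ δ ∈ S, δ.cof ≠ χ.ord.cof) :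
    DiamondFun (Order.succ χ).ord S := by
  have : NoMaxOrder (Iio χ.ord) := (isSuccLimit_ord hχ).isSuccPrelimit.noMaxOrder_Iio
  refine diamondFun_of_diamond_preimage_val hS.1 (diamond_of_cof_ne (T := Iio χ.ord)
    (fun i => ?mk_Iio_lt) ?infinite ?mk_eq (fun a => ?mk_Iio_le) ?lt_cof
    ((isStatIn_iff_isStationary_preimage_val hS.1).1 hS) fun δ hδ => ?cof_ne)
  case mk_Iio_lt => rw [mk_Iio_ord, mk_Iio_coe, Cardinal.lift_lt, ← lt_ord]; exact i.2
  case infinite => rwa [mk_Iio_ord, aleph0_le_lift]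
  case mk_eq => rw [mk_Iio_ord, mk_Iio_ord, ← h2, lift_power, lift_two]
  case mk_Iio_le =>
    rw [mk_Iio_ord, mk_Iio_coe, Cardinal.lift_le, ← Order.lt_succ_iff, ← lt_ord]; exact a.2
  case lt_cof =>
    rw [mk_Iio_ord, Ordinal.cof_Iio, ← lift_cof, (isRegular_succ hχ).cof_ord, Cardinal.lift_lt]
    exact Order.lt_succ χ
  case cof_ne =>
    rw [cof_Iio_coe, Ordinal.cof_Iio, ← lift_cof]
    exact fun h => hcf δ hδ (Cardinal.lift_injective h)
end

section
/- Assume λ = χ⁺ = 2^χ with ℵ₀ < κ = cf(χ) < χ. If ◊_S fails for some stationary S ⊆ S^λ_κ, then λ has strong non-reflection for S in κ, i.e. there are h : λ → κ and a club E of λ such that for every δ ∈ S ∩ E, h is strictly increasing on some club of δ. -/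
open Ordinal Set Cardinal

/-!
Attach to each `δ ∈ S` a continuous sequence `B_ε`, `ε < κ`, cofinal in `δ`, and to each `β < λ` an
injection `r_β : β → χ`; let `c_i`, `i < κ`, be cofinal in `χ`. The set `A_{δ,i}` of the ordinals
that some `r_{B_ε}` ranks below `c_i` has fewer than `χ` elements.

Read ordinals below `λ` as codes of families of functions on initial segments of `λ`. By recursion
on `j < χ`, the failure of diamond yields `X_{i,j} : λ → λ` such that, for club many `δ ∈ S`, if the
codes in `A_{δ,i}` that are correct about all earlier `X_{i,j'}` have lengths unbounded in `δ`, then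
one of them is wrong about `X_{i,j}`. Codes obtained for distinct `j` are distinct, and there is no
room for `χ` of them. Hence if `f α` codes the restrictions to `α` of all the `X_{i,j}`, the `α < δ`
with `f α ∈ A_{δ,i}` are bounded in `δ`.

Let `h β` be the least `i` such that the `α < β` with `r_β (f α) < c_i` are unbounded in `β`. The
bounds just obtained give `ε ≤ h (B_ε)` for club many `ε < κ`, and on those `B_ε` whose index `ε` is
moreover closed under `ε ↦ h (B_ε)` the function `h` is strictly increasing.
-/

universe u v

section Cardinals

theorem exists_forall_of_wellFoundedLT {J : Type u} {β : Type v} [LT J] [WellFoundedLT J]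
    {Q : (j : J) → ((j' : J) → j' < j → β) → β → Prop} (hQ : ∀ j P, ∃ b, Q j P b) :
    ∃ X : J → β, ∀ j, Q j (fun j' _ => X j') (X j) := by
  choose F hF using hQ
  refine ⟨WellFoundedLT.fix F, fun j => ?_⟩
  rw [WellFoundedLT.fix_eq F j]
  exact hF j _

theorem mk_le_of_forall_exists_first_failure_s8 {J : Type u} {α : Type v} [LinearOrder J]
    {A : Set α} {P : J → α → Prop} (h : ∀ j, ∃ a ∈ A, (∀ j' < j, P j' a) ∧ ¬ P j a) :
    lift.{v} #J ≤ lift.{u} #A := by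
  choose a haA hbefore hfail using h
  have ha : Function.Injective a := by
    intro j₁ j₂ h₁₂
    by_contra hne
    rcases lt_or_gt_of_ne hne with hlt | hlt
    · exact hfail j₁ (h₁₂ ▸ hbefore j₂ j₁ hlt)
    · exact hfail j₂ (h₁₂ ▸ hbefore j₁ j₂ hlt)
  exact lift_mk_le_lift_mk_of_injective (f := fun j => (⟨a j, haA j⟩ : A))
    fun _ _ h => ha (congrArg Subtype.val h)

theorem succ_power_self {μ : Cardinal.{u}} (hμ : ℵ₀ ≤ μ) (h : 2 ^ μ = Order.succ μ) :
    Order.succ μ ^ μ = Order.succ μ := by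
  rw [← h, ← power_mul, mul_eq_self hμ]

theorem mk_sigma_fun_le_succ {I N W : Type u} {T : I → Type u} {μ : Cardinal.{u}} (hμ : ℵ₀ ≤ μ)
    (h : 2 ^ μ = Order.succ μ) (hI : #I ≤ Order.succ μ) (hN : #N ≤ μ) (hT : ∀ i, #(T i) ≤ μ)
    (hW : #W ≤ Order.succ μ) : #(Σ i, N → T i → W) ≤ Order.succ μ := by
  have hfun (i : I) : #(N → T i → W) ≤ Order.succ μ :=
    calc #(N → T i → W) = #W ^ (#(T i) * #N) := by simp [power_mul]
      _ ≤ Order.succ μ ^ (#(T i) * #N) := power_le_power_right hW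
      _ ≤ Order.succ μ ^ (μ * μ) :=
        power_le_power_left (Order.succ_ne_bot μ) (mul_le_mul' (hT i) hN)
      _ = Order.succ μ := by rw [mul_eq_self hμ, succ_power_self hμ h]
  calc #(Σ i, N → T i → W) = sum fun i => #(N → T i → W) := mk_sigma _
    _ ≤ sum fun _ : I => Order.succ μ := sum_le_sum _ _ hfun
    _ = #I * Order.succ μ := by rw [sum_const, Cardinal.lift_id, Cardinal.lift_id]
    _ ≤ Order.succ μ * Order.succ μ := mul_le_mul_left hI _
    _ = Order.succ μ := mul_eq_self (hμ.trans (Order.le_succ μ))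

end Cardinals

section CofinalMaps

/-- `b`, restricted to the ordinals below `ρ`, is a cofinal map from `ρ` to `o`. It need not be
increasing, and its values outside `ρ` are irrelevant. -/
structure IsCofinalMap (ρ o : Ordinal.{u}) (b : Ordinal.{u} → Ordinal.{u}) : Prop where
  mapsTo : MapsTo b (Iio ρ) (Iio o)
  exists_le : ∀ x < o, ∃ i < ρ, x ≤ b i

theorem exists_isCofinalMap (o : Ordinal.{u}) : ∃ b, IsCofinalMap o.cof.ord o b := by
  obtain ⟨f, hf⟩ := exists_isFundamentalSeq (o := o) rfl
  have hext (i : Iio o.cof.ord) :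
      Function.extend Subtype.val (fun j => (f j : Ordinal)) 0 i = f i :=
    Subtype.val_injective.extend_apply _ _ i
  refine ⟨_, fun i hi => (hext ⟨i, hi⟩).trans_lt (f ⟨i, hi⟩).2, fun x hx => ?_⟩
  obtain ⟨_, ⟨i, rfl⟩, hi⟩ := hf.isCofinal_range ⟨x, hx⟩
  exact ⟨i, i.2, le_of_le_of_eq hi (hext i).symm⟩

theorem exists_injOn_mapsTo_Iio {a b : Ordinal.{u}} (h : a.card ≤ b.card) :
    ∃ r : Ordinal.{u} → Ordinal.{u}, InjOn r (Iio a) ∧ MapsTo r (Iio a) (Iio b) := by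
  obtain ⟨e⟩ : #(Iio a) ≤ #(Iio b) := by 
    simpa only [Cardinal.mk_Iio_ordinal, Cardinal.lift_le] using h
  have hext (x : Iio a) : Function.extend Subtype.val (fun y => (e y : Ordinal)) 0 x = e x :=
    Subtype.val_injective.extend_apply _ _ x
  refine ⟨_, fun x hx y hy hxy => ?_, fun x hx => (hext ⟨x, hx⟩).trans_lt (e ⟨x, hx⟩).2⟩
  have hexy : e ⟨x, hx⟩ = e ⟨y, hy⟩ :=
    Subtype.ext ((hext ⟨x, hx⟩).symm.trans (hxy.trans (hext ⟨y, hy⟩)))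
  exact congrArg Subtype.val (e.injective hexy)

theorem exists_monotoneOn_forall_lt {c : Cardinal.{u}} (hc : c.IsRegular) {ι : Type (u + 1)}
    (hι : #ι < lift.{u + 1} c) {f : ι → Ordinal.{u} → Ordinal.{u}}
    (hf : ∀ i, MapsTo (f i) (Iio c.ord) (Iio c.ord)) :
    ∃ M, MonotoneOn M (Iio c.ord) ∧ MapsTo M (Iio c.ord) (Iio c.ord) ∧
      ∀ i, ∀ α < c.ord, f i α < M α := by
  have hlt {α} (hα : α < c.ord) (p : ι × Iic α) : f p.1 p.2 < c.ord :=
    hf p.1 (lt_of_le_of_lt p.2.2 hα)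
  have hle {α} (hα : α < c.ord) (p : ι × Iic α) : f p.1 p.2 + 1 ≤ ⨆ q : ι × Iic α, f q.1 q.2 + 1 :=
    le_ciSup (f := fun q : ι × Iic α => f q.1 q.2 + 1)
      ⟨c.ord, forall_mem_range.2 fun q => Order.add_one_le_of_lt (hlt hα q)⟩ p
  refine ⟨fun α => ⨆ p : ι × Iic α, f p.1 p.2 + 1, fun α _ β hβ hαβ => ?_, fun α hα => ?_,
    fun i α hα => (lt_add_one _).trans_le (hle hα (i, ⟨α, self_mem_Iic⟩))⟩
  · exact ciSup_le' fun p => hle hβ (p.1, ⟨p.2, le_trans p.2.2 hαβ⟩)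
  · refine lift_iSup_add_one_lt_of_lt_cof ?_ (hlt hα)
    have hIic : #(Iic α) < lift.{u + 1} c := by
      rw [← Order.Iio_succ, Cardinal.mk_Iio_ordinal, Cardinal.lift_lt]
      exact lt_ord.1 ((isSuccLimit_ord hc.aleph0_le).succ_lt hα)
    have hprod : #(ι × Iic α) < lift.{u + 1} c := by
      simpa using mul_lt_of_lt (by simpa using hc.aleph0_le) hι hIic
    rwa [← lift_cof, hc.cof_ord, Cardinal.lift_id'.{u, u + 1}]

end CofinalMaps

section StrictSup

/-- The strict supremum of the values of `b` below `ε`. As a function of `ε` it is the continuous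
increasing sequence generated by `b`. -/
noncomputable def strictSup (b : Ordinal.{u} → Ordinal.{u}) (ε : Ordinal.{u}) : Ordinal.{u} :=
  ⨆ η : Iio ε, b η + 1

variable {b : Ordinal.{u} → Ordinal.{u}}

theorem lt_strictSup_iff {ε x : Ordinal.{u}} : x < strictSup b ε ↔ ∃ η < ε, x ≤ b η := by
  simp [strictSup, Ordinal.lt_iSup_iff]

theorem strictSup_mono : Monotone (strictSup b) := fun ε ε' h => le_of_forall_lt fun x hx => by
  obtain ⟨η, hη, hxη⟩ := lt_strictSup_iff.1 hx
  exact lt_strictSup_iff.2 ⟨η, hη.trans_le h, hxη⟩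

theorem strictSup_lt {ε o : Ordinal.{u}} (hε : ε.card < o.cof) (hb : MapsTo b (Iio ε) (Iio o)) :
    strictSup b ε < o := by
  refine lift_iSup_add_one_lt_of_lt_cof ?_ fun η => hb η.2
  rwa [Cardinal.mk_Iio_ordinal, ← lift_cof, Cardinal.lift_id'.{u, u + 1}, Cardinal.lift_lt]

variable {ρ δ : Ordinal.{u}}

theorem mapsTo_Iio_strictSup {M : Ordinal.{u} → Ordinal.{u}} {ε : Ordinal.{u}}
    (hM : MonotoneOn M (Iio δ)) (hb : MapsTo b (Iio ε) (Iio δ)) (hδ : strictSup b ε ≤ δ)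
    (hMb : ∀ η < ε, M (b η) < strictSup b ε) :
    MapsTo M (Iio (strictSup b ε)) (Iio (strictSup b ε)) := fun α hα => by
  obtain ⟨η, hη, hαη⟩ := lt_strictSup_iff.1 hα
  exact (hM (lt_of_lt_of_le hα hδ) (hb hη) hαη).trans_lt (hMb η hη)

theorem IsCofinalMap.mapsTo_strictSup (hb : IsCofinalMap ρ δ b) (hρ : ρ ≤ δ.cof.ord) :
    MapsTo (strictSup b) (Iio ρ) (Iio δ) := fun _ hε =>
  strictSup_lt (lt_ord.1 (lt_of_lt_of_le hε hρ))
    fun _ hη => hb.mapsTo (mem_Iio.2 (lt_trans hη hε))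

theorem IsCofinalMap.exists_lt_strictSup (hb : IsCofinalMap ρ δ b) (hρ : Order.IsSuccLimit ρ)
    {x : Ordinal.{u}} (hx : x < δ) : ∃ ε < ρ, x < strictSup b ε := by
  obtain ⟨i, hi, hxi⟩ := hb.exists_le x hx
  exact ⟨Order.succ i, hρ.succ_lt hi, lt_strictSup_iff.2 ⟨i, Order.lt_succ i, hxi⟩⟩

end StrictSup

section Clubs

theorem IsClubIn.mem_of_forall_exists_between {o a : Ordinal.{0}} {C : Set Ordinal}
    (hC : IsClubIn o C) (ha : a < o) (ha₀ : 0 < a) (h : ∀ x < a, ∃ y ∈ C, x < y ∧ y < a) :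
    a ∈ C := by
  have hne : (C ∩ Iio a).Nonempty := (h 0 ha₀).imp fun _ hy => ⟨hy.1, hy.2.2⟩
  refine hC.2.2 a ha hne (le_antisymm (csSup_le hne fun _ hy => le_of_lt hy.2) ?_)
  refine le_of_forall_lt fun x hx => ?_
  obtain ⟨y, hy, hxy, hya⟩ := h x hx
  exact hxy.trans_le (le_csSup ⟨a, fun _ hz => le_of_lt hz.2⟩ ⟨hy, hya⟩)

theorem IsClubIn.image_strictSup {ρ δ : Ordinal.{0}} {b : Ordinal → Ordinal} {D : Set Ordinal}
    (hD : IsClubIn ρ D) (hb : IsCofinalMap ρ δ b) (hρ : Order.IsSuccLimit ρ)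
    (hρδ : ρ ≤ δ.cof.ord) : IsClubIn δ (strictSup b '' D) := by
  refine ⟨((hb.mapsTo_strictSup hρδ).mono_left hD.1).image_subset, fun a ha => ?_,
    fun a ha hne hsup => ?_⟩
  · obtain ⟨ξ, hξ, hlt⟩ := hb.exists_lt_strictSup hρ ha
    obtain ⟨ε, hε, hle⟩ := hD.2.1 ξ hξ
    exact ⟨_, mem_image_of_mem _ hε, hlt.le.trans (strictSup_mono hle)⟩
  obtain ⟨ξ, hξ, hltξ⟩ := hb.exists_lt_strictSup hρ ha
  -- `a = strictSup b ε` for the least `ε` with `a ≤ strictSup b ε`, by continuity of `strictSup b`.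
  obtain ⟨ε, hεa, hmin⟩ : ∃ ε, a ≤ strictSup b ε ∧ ∀ η < ε, strictSup b η < a :=
    ⟨sInf {ε | a ≤ strictSup b ε}, csInf_mem (s := {ε | a ≤ strictSup b ε}) ⟨ξ, hltξ.le⟩,
      fun η hη => not_le.1 (notMem_of_lt_csInf' (s := {ε | a ≤ strictSup b ε}) hη)⟩
  have happrox : ∀ x < a, ∃ ε' ∈ D, ε' < ε ∧ x < strictSup b ε' := by
    intro x hx
    rw [← hsup] at hx
    obtain ⟨_, ⟨⟨ε', hε', rfl⟩, hlt⟩, hx'⟩ := exists_lt_of_lt_csSup hne hx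
    exact ⟨ε', hε', strictSup_mono.reflect_lt (lt_of_lt_of_le hlt hεa), hx'⟩
  have hbelow : ∀ η < ε, ∃ ε' ∈ D, η < ε' ∧ ε' < ε := fun η hη =>
    (happrox _ (hmin η hη)).imp fun _ h => ⟨h.1, strictSup_mono.reflect_lt h.2.2, h.2.1⟩
  have hεD : ε ∈ D := by
    obtain ⟨x, -, hx⟩ := hne
    obtain ⟨ε', -, hε', -⟩ := happrox x hx
    have hερ : ε < ρ := lt_of_le_of_lt (not_lt.1 fun h => (hmin ξ h).not_gt hltξ) hξ
    exact hD.mem_of_forall_exists_between hερ (pos_of_gt hε') hbelow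
  refine ⟨ε, hεD, le_antisymm (not_lt.1 fun h => ?_) hεa⟩
  obtain ⟨η, hη, haη⟩ := lt_strictSup_iff.1 h
  obtain ⟨ε', -, hηε', hε'⟩ := hbelow η hη
  exact (hmin ε' hε').not_gt (lt_strictSup_iff.2 ⟨η, hηε', haη⟩)

/-- The nonzero ordinals below `o` that are closed under `m`. For regular uncountable `o` and
`m : o → o` these form a club, and every club contains one of this form. -/
def closurePoints (o : Ordinal.{u}) (m : Ordinal.{u} → Ordinal.{u}) : Set Ordinal.{u} :=
  {ε ∈ Ioo 0 o | MapsTo m (Iio ε) (Iio ε)}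

theorem closurePoints_subset {o : Ordinal.{u}} {m M : Ordinal.{u} → Ordinal.{u}}
    (h : ∀ η < o, m η ≤ M η) : closurePoints o M ⊆ closurePoints o m := fun _ hε =>
  ⟨hε.1, fun η hη => (h η (lt_trans hη hε.1.2)).trans_lt (hε.2 hη)⟩

theorem exists_mem_closurePoints_gt {c : Cardinal.{u}} (hc : c.IsRegular) (hc₀ : ℵ₀ < c)
    {m : Ordinal.{u} → Ordinal.{u}} (hm : MapsTo m (Iio c.ord) (Iio c.ord)) {a : Ordinal.{u}}
    (ha : a < c.ord) : ∃ ε ∈ closurePoints c.ord m, a < ε := by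
  obtain ⟨M, hMmono, hMc, hM⟩ := exists_monotoneOn_forall_lt hc (ι := PUnit)
    (f := fun _ α => max (m α) α) (by simpa using one_lt_aleph0.trans hc₀)
    fun _ α hα => mem_Iio.2 (max_lt (hm hα) hα)
  have hlt : nfp M a < c.ord := nfp_lt_ord_of_isRegular hc hc₀.ne' hMc ha
  have haM : a < nfp M a :=
    ((le_max_right _ _).trans_lt (hM ⟨⟩ a ha)).trans_le (iterate_le_nfp M a 1)
  refine ⟨nfp M a, ⟨⟨pos_of_gt haM, hlt⟩, fun η hη => ?_⟩, haM⟩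
  obtain ⟨n, hn⟩ := lt_nfp_iff.1 hη
  calc m η ≤ max (m η) η := le_max_left _ _
    _ < M η := hM ⟨⟩ η (lt_trans hη hlt)
    _ ≤ M (M^[n] a) := hMmono (lt_trans hη hlt) ((iterate_le_nfp M a n).trans_lt hlt) hn.le
    _ = M^[n + 1] a := (Function.iterate_succ_apply' M n a).symm
    _ ≤ nfp M a := iterate_le_nfp M a (n + 1)

theorem isClubIn_closurePoints {c : Cardinal.{0}} (hc : c.IsRegular) (hc₀ : ℵ₀ < c)
    {m : Ordinal → Ordinal} (hm : MapsTo m (Iio c.ord) (Iio c.ord)) :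
    IsClubIn c.ord (closurePoints c.ord m) := by
  refine ⟨fun ε hε => hε.1.2, fun a ha => ?_, fun a ha hne hsup => ⟨⟨?_, ha⟩, fun η hη => ?_⟩⟩
  · exact (exists_mem_closurePoints_gt hc hc₀ hm ha).imp fun _ h => ⟨h.1, h.2.le⟩
  · obtain ⟨ε, -, hε⟩ := hne
    exact pos_of_gt hε
  · rw [← hsup] at hη
    obtain ⟨ε, hε, hηε⟩ := exists_lt_of_lt_csSup hne hη
    exact mem_Iio.2 (lt_trans (hε.1.2 hηε) hε.2)

theorem IsClubIn.exists_closurePoints_subset {o : Ordinal.{0}} (ho : Order.IsSuccLimit o)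
    {C : Set Ordinal} (hC : IsClubIn o C) :
    ∃ m, MapsTo m (Iio o) (Iio o) ∧ closurePoints o m ⊆ C := by
  have hnext : ∀ a, a < o → ∃ b ∈ C, a < b := fun a ha =>
    (hC.2.1 _ (ho.succ_lt ha)).imp fun _ h => ⟨h.1, Order.succ_le_iff.1 h.2⟩
  choose! m hmC hm using hnext
  refine ⟨m, fun a ha => hC.1 (hmC a ha), fun δ hδ => ?_⟩
  refine hC.mem_of_forall_exists_between hδ.1.2 hδ.1.1 fun x hx => ?_
  have hxo : x < o := hx.trans hδ.1.2
  exact ⟨m x, hmC x hxo, hm x hxo, hδ.2 hx⟩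

end Clubs

section DiamondFailure

theorem exists_coding {χ : Cardinal.{u}} (hχ : ℵ₀ ≤ χ) (h2 : 2 ^ χ = Order.succ χ)
    {N : Type (u + 1)} (hN : #N ≤ lift.{u + 1} χ) :
    ∃ (len : Ordinal.{u} → Ordinal.{u}) (val : Ordinal.{u} → N → Ordinal.{u} → Ordinal.{u}),
      ∀ α < (Order.succ χ).ord, ∀ X : N → Ordinal.{u} → Ordinal.{u},
        (∀ n, MapsTo (X n) (Iio α) (Iio (Order.succ χ).ord)) →
          ∃ γ < (Order.succ χ).ord, len γ = α ∧ ∀ n, EqOn (val γ n) (X n) (Iio α) := by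
  let T := Σ α : Iio (Order.succ χ).ord, N → Iio α.1 → Iio (Order.succ χ).ord
  have hIio : #(Iio (Order.succ χ).ord) = Order.succ (lift.{u + 1} χ) := by
    rw [Cardinal.mk_Iio_ordinal, card_ord, Cardinal.lift_succ]
  have hT : #T ≤ #(Iio (Order.succ χ).ord) := by
    rw [hIio]
    refine mk_sigma_fun_le_succ (aleph0_le_lift.2 hχ) ?_ hIio.le hN (fun α => ?_) hIio.le
    · rw [← Cardinal.lift_succ, ← h2, Cardinal.lift_power, Cardinal.lift_ofNat]
    · rw [Cardinal.mk_Iio_ordinal, Cardinal.lift_le, ← Order.lt_succ_iff]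
      exact lt_ord.1 α.2
  obtain ⟨e⟩ := hT
  have he : Function.Injective fun t => (e t : Ordinal) := Subtype.val_injective.comp e.injective
  refine ⟨Function.extend (fun t => (e t : Ordinal)) (fun t => t.1) 0,
    Function.extend (fun t => (e t : Ordinal))
      (fun t n x => if hx : x < t.1 then t.2 n ⟨x, hx⟩ else 0) 0, fun α hα X hX => ?_⟩
  let t : T := ⟨⟨α, hα⟩, fun n x => ⟨X n x, hX n x.2⟩⟩
  refine ⟨e t, (e t).2, he.extend_apply _ _ t, fun n x hx => ?_⟩
  rw [he.extend_apply _ _ t]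
  exact dif_pos hx

variable {o : Ordinal.{0}} {S : Set Ordinal}

theorem exists_not_eqOn_of_not_diamondFun (ho : Order.IsSuccLimit o) (hS : S ⊆ Iio o)
    (hfail : ¬ DiamondFun o S) (g : Ordinal → Ordinal → Ordinal) :
    ∃ X m, MapsTo X (Iio o) (Iio o) ∧ MapsTo m (Iio o) (Iio o) ∧
      ∀ δ ∈ S ∩ closurePoints o m, ¬ EqOn (g δ) X (Iio δ) := by
  classical
  have hg : ∀ δ ∈ S, ∀ α < δ, (if g δ α < δ then g δ α else 0) < δ := by
    intro δ _ α hα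
    split_ifs with h
    exacts [h, pos_of_gt hα]
  obtain ⟨X, hX, hns⟩ := not_forall₂.1 fun h => hfail ⟨_, hg, h⟩
  obtain ⟨C, hC, hdisj⟩ := not_forall₂.1 fun h => hns ⟨fun δ hδ => hS hδ.1, h⟩
  obtain ⟨m, hm, hmC⟩ := hC.exists_closurePoints_subset ho
  refine ⟨X, fun α => max (m α) (X α), hX, fun α hα => max_lt (hm hα) (hX α hα), ?_⟩
  rintro δ ⟨hδS, hδ⟩ heq
  refine hdisj ⟨δ, ⟨hδS, fun α hα => ?_⟩,
    hmC (closurePoints_subset (fun _ _ => le_max_left _ _) hδ)⟩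
  have hXα : X α < δ := (le_max_right _ _).trans_lt (hδ.2 hα)
  rw [heq hα, if_pos hXα]

theorem exists_not_eqOn_mem_of_not_diamondFun (ho : Order.IsSuccLimit o) (hS : S ⊆ Iio o)
    (hfail : ¬ DiamondFun o S) (A : Ordinal → Set Ordinal) (len : Ordinal → Ordinal)
    (val : Ordinal → Ordinal → Ordinal) :
    ∃ X m, MapsTo X (Iio o) (Iio o) ∧ MapsTo m (Iio o) (Iio o) ∧
      ∀ δ ∈ S ∩ closurePoints o m, (∀ x < δ, ∃ γ ∈ A δ, x < len γ) →
        ∃ γ ∈ A δ, ¬ EqOn (val γ) X (Iio (len γ)) := by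
  choose! γ hγ using fun δ x (h : ∃ γ ∈ A δ, x < len γ) => h
  obtain ⟨X, m, hX, hm, hne⟩ :=
    exists_not_eqOn_of_not_diamondFun ho hS hfail fun δ x => val (γ δ x) x
  refine ⟨X, m, hX, hm, fun δ hδ hA => ?_⟩
  by_contra! hall
  refine hne δ hδ fun x hx => ?_
  obtain ⟨hγA, hxγ⟩ := hγ δ x (hA x hx)
  exact hall _ hγA hxγ

theorem exists_mk_le_of_not_diamondFun (ho : Order.IsSuccLimit o) (hS : S ⊆ Iio o)
    (hfail : ¬ DiamondFun o S) {J : Type v} [LinearOrder J] [WellFoundedLT J]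
    (A : Ordinal → Set Ordinal) (len : Ordinal → Ordinal)
    (val : Ordinal → J → Ordinal → Ordinal) :
    ∃ X m : J → Ordinal → Ordinal,
      (∀ j, MapsTo (X j) (Iio o) (Iio o)) ∧ (∀ j, MapsTo (m j) (Iio o) (Iio o)) ∧
      ∀ δ ∈ S, (∀ j, δ ∈ closurePoints o (m j)) →
        (∀ x < δ, ∃ γ ∈ A δ, x < len γ ∧ ∀ j, EqOn (val γ j) (X j) (Iio (len γ))) →
          lift.{1, v} #J ≤ lift.{v, 1} #(A δ) := by
  have hstep (j : J) (P : (j' : J) → j' < j → (Ordinal → Ordinal) × (Ordinal → Ordinal)) :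
      ∃ p : (Ordinal → Ordinal) × (Ordinal → Ordinal),
        MapsTo p.1 (Iio o) (Iio o) ∧ MapsTo p.2 (Iio o) (Iio o) ∧
        ∀ δ ∈ S ∩ closurePoints o p.2,
          (∀ x < δ, ∃ γ ∈ {γ ∈ A δ | ∀ j' h, EqOn (val γ j') (P j' h).1 (Iio (len γ))},
            x < len γ) →
          ∃ γ ∈ {γ ∈ A δ | ∀ j' h, EqOn (val γ j') (P j' h).1 (Iio (len γ))},
            ¬ EqOn (val γ j) p.1 (Iio (len γ)) := by
    obtain ⟨X, m, h⟩ := exists_not_eqOn_mem_of_not_diamondFun ho hS hfail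
      (fun δ => {γ ∈ A δ | ∀ j' h, EqOn (val γ j') (P j' h).1 (Iio (len γ))}) len
      fun γ => val γ j
    exact ⟨(X, m), h⟩
  obtain ⟨p, hp⟩ := exists_forall_of_wellFoundedLT hstep
  refine ⟨fun j => (p j).1, fun j => (p j).2, fun j => (hp j).1, fun j => (hp j).2.1,
    fun δ hδS hδ hA => ?_⟩
  refine mk_le_of_forall_exists_first_failure_s8
    (P := fun j γ => EqOn (val γ j) (p j).1 (Iio (len γ))) fun j => ?_
  obtain ⟨γ, ⟨hγA, hbefore⟩, hne⟩ := (hp j).2.2 δ ⟨hδS, hδ j⟩ fun x hx => by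
    obtain ⟨γ, hγA, hxγ, hall⟩ := hA x hx
    exact ⟨γ, ⟨hγA, fun j' _ => hall j'⟩, hxγ⟩
  exact ⟨γ, hγA, hbefore, hne⟩

theorem exists_forall_mem_le_of_not_diamondFun {χ : Cardinal.{0}} (hχ : ℵ₀ ≤ χ)
    (h2 : 2 ^ χ = Order.succ χ) (hS : S ⊆ Iio (Order.succ χ).ord)
    (hfail : ¬ DiamondFun (Order.succ χ).ord S) {ι : Type 1} (hι : #ι ≤ lift.{1} χ)
    {A : Ordinal → ι → Set Ordinal} (hA : ∀ δ ∈ S, ∀ i, #(A δ i) < lift.{1} χ) :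
    ∃ f M : Ordinal → Ordinal, MonotoneOn M (Iio (Order.succ χ).ord) ∧
      MapsTo M (Iio (Order.succ χ).ord) (Iio (Order.succ χ).ord) ∧
      (∀ α < (Order.succ χ).ord, max (f α) α < M α) ∧
      ∀ δ ∈ S ∩ closurePoints (Order.succ χ).ord M, ∀ i,
        ∃ s < δ, ∀ α < δ, f α ∈ A δ i → α ≤ s := by
  have hreg : (Order.succ χ).IsRegular := isRegular_succ hχ
  have hχ' : ℵ₀ ≤ lift.{1} χ := aleph0_le_lift.2 hχ
  have hJ : #(Iio χ.ord) = lift.{1} χ := by rw [Cardinal.mk_Iio_ordinal, card_ord]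
  have hN : #(ι × Iio χ.ord) ≤ lift.{1} χ := by
    rw [mk_prod, Cardinal.lift_id, Cardinal.lift_id, hJ]
    exact mul_le_of_le hχ' hι le_rfl
  obtain ⟨len, val, hcode⟩ := exists_coding hχ h2 hN
  have hdiag (i : ι) := exists_mk_le_of_not_diamondFun (isSuccLimit_ord hreg.aleph0_le) hS hfail
    (J := Iio χ.ord) (fun δ => A δ i) len fun γ j => val γ (i, j)
  choose X m hX hm hle using hdiag
  choose! f hf hlen hval using fun α (hα : α < (Order.succ χ).ord) =>
    hcode α hα (fun n => X n.1 n.2) fun n => (hX n.1 n.2).mono_left (Iio_subset_Iio hα.le)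
  have hOption : #(Option (ι × Iio χ.ord)) < lift.{1} (Order.succ χ) := by
    rw [mk_option, Cardinal.lift_succ, Order.lt_succ_iff]
    exact add_le_of_le hχ' hN (one_le_aleph0.trans hχ')
  obtain ⟨M, hMmono, hM, hlt⟩ := exists_monotoneOn_forall_lt hreg hOption
    (f := fun n => n.elim (fun α => max (f α) α) fun n => m n.1 n.2) <| Option.forall.2
      ⟨fun α hα => mem_Iio.2 (max_lt (hf α hα) hα), fun n => hm n.1 n.2⟩
  refine ⟨f, M, hMmono, hM, hlt none, fun δ hδ i => ?_⟩
  by_contra! hunb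
  refine (hA δ hδ.1 i).not_ge ?_
  have hJA := hle i δ hδ.1
    (fun j => closurePoints_subset (fun η hη => (hlt (some (i, j)) η hη).le) hδ.2) fun x hx => by
      obtain ⟨α, hα, hαA, hxα⟩ := hunb x hx
      have hαo : α < (Order.succ χ).ord := hα.trans (hS hδ.1)
      exact ⟨f α, hαA, (hlen α hαo).symm ▸ hxα, fun j => (hlen α hαo).symm ▸ hval α hαo (i, j)⟩
  simpa only [hJ, Cardinal.lift_id] using hJA

end DiamondFailure

section UnboundedIndex

/-- The ordinals that some member `B ε`, `ε < ρ`, of the sequence `B` ranks below `ζ`, where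
`r β : β → o` is the ranking attached to the ordinal `β`. These are the sets of possible guesses
to which the failure of diamond is applied. -/
def lowRankSet (r : Ordinal.{u} → Ordinal.{u} → Ordinal.{u}) (B : Ordinal.{u} → Ordinal.{u})
    (ρ ζ : Ordinal.{u}) : Set Ordinal.{u} :=
  ⋃ ε ∈ Iio ρ, {γ ∈ Iio (B ε) | r (B ε) γ < ζ}

theorem mk_lowRankSet_le {r : Ordinal.{u} → Ordinal.{u} → Ordinal.{u}}
    {B : Ordinal.{u} → Ordinal.{u}} {ρ ζ : Ordinal.{u}}
    (hr : ∀ ε < ρ, InjOn (r (B ε)) (Iio (B ε))) :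
    #(lowRankSet r B ρ ζ) ≤ lift.{u + 1} (ρ.card * ζ.card) := by
  have hpiece (ε : Iio ρ) : #{γ ∈ Iio (B ε) | r (B ε) γ < ζ} ≤ lift.{u + 1} ζ.card := by
    rw [← Cardinal.mk_Iio_ordinal, ← mk_image_eq_of_injOn _ _ ((hr ε ε.2).mono (sep_subset _ _))]
    exact mk_le_mk_of_subset (image_subset_iff.2 fun γ hγ => hγ.2)
  calc #(lowRankSet r B ρ ζ)
      ≤ #(Iio ρ) * ⨆ ε : Iio ρ, #{γ ∈ Iio (B ε) | r (B ε) γ < ζ} := mk_biUnion_le _ _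
    _ ≤ lift.{u + 1} ρ.card * lift.{u + 1} ζ.card :=
      mul_le_mul' (Cardinal.mk_Iio_ordinal ρ).le (ciSup_le' hpiece)
    _ = lift.{u + 1} (ρ.card * ζ.card) := (Cardinal.lift_mul _ _).symm

/-- The least `i < ρ` such that the `α < β` whose code `f α` has rank below `c i` are unbounded
in `β`; by convention it is `0` if there is no such `i`. -/
noncomputable def unboundedIndex (f r c : Ordinal.{u} → Ordinal.{u}) (ρ β : Ordinal.{u}) :
    Ordinal.{u} :=
  sInf {i | i < ρ ∧ ∀ s < β, ∃ α ∈ Ioo s β, r (f α) < c i}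

variable {f r c : Ordinal.{u} → Ordinal.{u}} {ρ β : Ordinal.{u}}

theorem unboundedIndex_lt (hρ : 0 < ρ) : unboundedIndex f r c ρ β < ρ := by
  rcases eq_empty_or_nonempty {i | i < ρ ∧ ∀ s < β, ∃ α ∈ Ioo s β, r (f α) < c i} with h | h
  · rwa [unboundedIndex, h, Ordinal.sInf_empty]
  · exact (csInf_mem h).1

theorem exists_mem_Ioo_lt_unboundedIndex {θ ε : Ordinal.{u}} {a : Ordinal.{u} → Ordinal.{u}}
    (hc : IsCofinalMap ρ θ c) (hε : ε.card < θ.cof) (ha : MapsTo a (Iio ε) (Iio β))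
    (hacof : ∀ s < β, ∃ η < ε, s < a η) (hr : ∀ α < β, r (f α) < θ) :
    ∀ s < β, ∃ α ∈ Ioo s β, r (f α) < c (unboundedIndex f r c ρ β) := by
  obtain ⟨i, hi, hle⟩ := hc.exists_le (strictSup (r ∘ f ∘ a) ε)
    (strictSup_lt hε fun η hη => hr (a η) (ha hη))
  refine (csInf_mem (s := {i | i < ρ ∧ ∀ s < β, ∃ α ∈ Ioo s β, r (f α) < c i})
    ⟨i, hi, fun s hs => ?_⟩).2
  obtain ⟨η, hη, hsη⟩ := hacof s hs
  exact ⟨a η, ⟨hsη, ha hη⟩, (lt_strictSup_iff.2 ⟨η, hη, le_rfl⟩).trans_le hle⟩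

theorem exists_forall_le_unboundedIndex {R : Ordinal.{u} → Ordinal.{u} → Ordinal.{u}}
    {b M : Ordinal.{u} → Ordinal.{u}} {θ δ : Ordinal.{u}} (hc : IsCofinalMap ρ θ c)
    (hρθ : ρ ≤ θ.cof.ord) (hb : IsCofinalMap ρ δ b) (hρδ : ρ ≤ δ.cof.ord)
    (hρ : Order.IsSuccLimit ρ) (hR : ∀ β < δ, MapsTo (R β) (Iio β) (Iio θ))
    (hMmono : MonotoneOn M (Iio δ)) (hM : MapsTo M (Iio δ) (Iio δ))
    (hlt : ∀ α < δ, max (f α) α < M α)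
    (hbdd : ∀ i < ρ, ∃ s < δ, ∀ α < δ, f α ∈ lowRankSet R (strictSup b) ρ (c i) → α ≤ s) :
    ∃ m, MapsTo m (Iio ρ) (Iio ρ) ∧ ∀ ε ∈ closurePoints ρ m,
      ε ≤ unboundedIndex f (R (strictSup b ε)) c ρ (strictSup b ε) := by
  choose! s hsδ hs using hbdd
  choose! m hmρ hm using fun η (hη : η < ρ) =>
    hb.exists_lt_strictSup hρ (max_lt (hsδ η hη) (hM (hb.mapsTo hη)))
  refine ⟨m, hmρ, fun ε ⟨⟨_, hερ⟩, hmε⟩ => ?_⟩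
  have hBδ : strictSup b ε < δ := hb.mapsTo_strictSup hρδ hερ
  have hbelow {η} (hη : η < ε) : max (s η) (M (b η)) < strictSup b ε :=
    (hm η (hη.trans hερ)).trans_le (strictSup_mono (le_of_lt (hmε hη)))
  have hMb : ∀ η < ε, M (b η) < strictSup b ε := fun η hη =>
    (le_max_right _ _).trans_lt (hbelow hη)
  have hbε : MapsTo b (Iio ε) (Iio δ) := hb.mapsTo.mono_left (Iio_subset_Iio hερ.le)
  have hfB : ∀ α < strictSup b ε, f α < strictSup b ε := fun α hα =>
    ((le_max_left _ _).trans_lt (hlt α (hα.trans hBδ))).trans (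
      mapsTo_Iio_strictSup hMmono hbε hBδ.le hMb hα)
  have hunb := exists_mem_Ioo_lt_unboundedIndex (f := f) (r := R (strictSup b ε))
    (a := fun η => M (b η)) hc (lt_ord.1 (hερ.trans_le hρθ)) hMb
    (fun x hx => (lt_strictSup_iff.1 hx).imp fun η hη =>
      ⟨hη.1, hη.2.trans_lt ((le_max_right _ _).trans_lt (hlt _ (hbε hη.1)))⟩)
    fun α hα => hR _ hBδ (hfB α hα)
  by_contra! hi
  obtain ⟨α, ⟨hsα, hαB⟩, hrank⟩ := hunb _ ((le_max_left _ _).trans_lt (hbelow hi))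
  refine hsα.not_ge (hs _ (hi.trans hερ) α (hαB.trans hBδ) ?_)
  exact mem_biUnion (mem_Iio.2 hερ) ⟨hfB α hαB, hrank⟩

theorem exists_isClubIn_strictMonoOn_of_le {κ : Cardinal.{0}} (hκ : κ.IsRegular) (hκ₀ : ℵ₀ < κ)
    {δ : Ordinal.{0}} {b m h : Ordinal → Ordinal} (hb : IsCofinalMap κ.ord δ b)
    (hδ : κ ≤ δ.cof) (hm : MapsTo m (Iio κ.ord) (Iio κ.ord))
    (hh : ∀ ε < κ.ord, h (strictSup b ε) < κ.ord)
    (hle : ∀ ε ∈ closurePoints κ.ord m, ε ≤ h (strictSup b ε)) :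
    ∃ C, IsClubIn δ C ∧ StrictMonoOn h C := by
  have hclub : IsClubIn κ.ord (closurePoints κ.ord fun ε => max (m ε) (h (strictSup b ε))) :=
    isClubIn_closurePoints hκ hκ₀ fun ε hε => mem_Iio.2 (max_lt (hm hε) (hh ε hε))
  refine ⟨_, hclub.image_strictSup hb (isSuccLimit_ord hκ.aleph0_le) (ord_le_ord.2 hδ), ?_⟩
  rintro _ ⟨ε, -, rfl⟩ _ ⟨ε', hε', rfl⟩ hlt
  calc h (strictSup b ε) ≤ max (m ε) (h (strictSup b ε)) := le_max_right _ _
    _ < ε' := hε'.2 (strictSup_mono.reflect_lt hlt)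
    _ ≤ h (strictSup b ε') := hle ε' (closurePoints_subset (fun _ _ => le_max_left _ _) hε')

theorem exists_isClubIn_strictMonoOn_unboundedIndex {κ : Cardinal.{0}} (hκ : κ.IsRegular)
    (hκ₀ : ℵ₀ < κ) {f c b M : Ordinal → Ordinal} {R : Ordinal → Ordinal → Ordinal}
    {θ δ : Ordinal.{0}} (hc : IsCofinalMap κ.ord θ c) (hθ : κ ≤ θ.cof)
    (hb : IsCofinalMap κ.ord δ b) (hδ : κ ≤ δ.cof)
    (hR : ∀ β < δ, MapsTo (R β) (Iio β) (Iio θ))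
    (hMmono : MonotoneOn M (Iio δ)) (hM : MapsTo M (Iio δ) (Iio δ))
    (hlt : ∀ α < δ, max (f α) α < M α)
    (hbdd : ∀ i < κ.ord, ∃ s < δ, ∀ α < δ, f α ∈ lowRankSet R (strictSup b) κ.ord (c i) → α ≤ s) :
    ∃ C, IsClubIn δ C ∧ StrictMonoOn (fun β => unboundedIndex f (R β) c κ.ord β) C := by
  obtain ⟨m, hm, hle⟩ := exists_forall_le_unboundedIndex hc (ord_le_ord.2 hθ) hb
    (ord_le_ord.2 hδ) (isSuccLimit_ord hκ.aleph0_le) hR hMmono hM hlt hbdd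
  exact exists_isClubIn_strictMonoOn_of_le hκ hκ₀ hb hδ hm
    (fun _ _ => unboundedIndex_lt (ord_pos.2 hκ.pos)) hle

end UnboundedIndex

theorem stmt8 (χ κ : Cardinal.{0}) (hκ : ℵ₀ < κ) (hcofχ : χ.ord.cof = κ) (hκχ : κ < χ)
    (h2 : (2 : Cardinal.{0}) ^ χ = Order.succ χ)
    (S : Set Ordinal) (hSsub : S ⊆ {δ | δ < (Order.succ χ).ord ∧ δ.cof = κ})
    (hS : IsStatIn (Order.succ χ).ord S)
    (hfail : ¬ DiamondFun (Order.succ χ).ord S) :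
    SNR (Order.succ χ).ord S κ := by
  have hχ : ℵ₀ ≤ χ := (hκ.trans hκχ).le
  have hreg : (Order.succ χ).IsRegular := isRegular_succ hχ
  have hκreg : κ.IsRegular := hcofχ ▸ isRegular_cof (isSuccLimit_ord hχ)
  choose! b hb using fun δ (hδ : δ ∈ S) => (hSsub hδ).2 ▸ exists_isCofinalMap δ
  obtain ⟨c, hc⟩ : ∃ c, IsCofinalMap κ.ord χ.ord c := hcofχ ▸ exists_isCofinalMap χ.ord
  choose! R hRinj hRχ using fun β (hβ : β < (Order.succ χ).ord) =>
    exists_injOn_mapsTo_Iio (b := χ.ord) (by simpa [lt_ord] using hβ : β.card ≤ χ.ord.card)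
  have hA : ∀ δ ∈ S, ∀ i : Iio κ.ord,
      #(lowRankSet R (strictSup (b δ)) κ.ord (c i)) < lift.{1} χ := fun δ hδ i =>
    (mk_lowRankSet_le fun ε hε => hRinj _ <| lt_trans ((hb δ hδ).mapsTo_strictSup
      (congrArg ord (hSsub hδ).2).ge hε) (hSsub hδ).1).trans_lt <|
      Cardinal.lift_lt.2 <| mul_lt_of_lt hχ (by rwa [card_ord]) (lt_ord.1 (hc.mapsTo i.2))
  obtain ⟨f, M, hMmono, hM, hlt, hbdd⟩ := exists_forall_mem_le_of_not_diamondFun hχ h2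
    (fun δ hδ => (hSsub hδ).1) hfail (by simpa using hκχ.le) hA
  refine ⟨fun β => unboundedIndex f (R β) c κ.ord β,
    fun β _ => unboundedIndex_lt (ord_pos.2 hκreg.pos), _,
    isClubIn_closurePoints hreg (hκ.trans (hκχ.trans (Order.lt_succ χ))) hM, ?_⟩
  rintro δ ⟨hδS, hδ⟩
  have hδo : Iio δ ⊆ Iio (Order.succ χ).ord := Iio_subset_Iio hδ.1.2.le
  exact exists_isClubIn_strictMonoOn_unboundedIndex hκreg hκ hc hcofχ.ge (hb δ hδS)
    (hSsub hδS).2.ge (fun β hβ => hRχ β (hδo hβ)) (hMmono.mono hδo) hδ.2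
    (fun α hα => hlt α (hδo hα)) fun i hi => hbdd δ ⟨hδS, hδ⟩ ⟨i, hi⟩
end
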